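/- If a temporal graph G admits an ATTO, then the set Ness(G) of necessary arcs induces an acyclic digraph (it contains no directed cycle). -/

import Mathlib

def IsOrientation {V : Type*} (G : SimpleGraph V) (O : V → V → Prop) : Prop :=
  (∀ a b, O a b → G.Adj a b) ∧ (∀ a b, G.Adj a b → (O a b ↔ ¬ O b a))

/-- Arc of the implication digraph `Imp(G)`. -/
def ImpArc {V : Type*} (G : SimpleGraph V) (lam : V → V → ℕ) (p q : V × V) : Prop :=
  ∃ a b c, G.Adj a b ∧ G.Adj b c ∧ lam a b ≤ lam b c ∧
    (¬ G.Adj a c ∨ lam a c < lam b c) ∧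
    ((p = (a, b) ∧ q = (c, b)) ∨ (p = (b, c) ∧ q = (b, a)))

/-- `(a,b,c,d)` is a correlated monolabel triangle with common label `t`. -/
def CorrTri {V : Type*} (G : SimpleGraph V) (lam : V → V → ℕ) (a b c d : V) (t : ℕ) : Prop :=
  G.Adj a b ∧ G.Adj b c ∧ G.Adj c a ∧
    lam a b = t ∧ lam b c = t ∧ lam c a = t ∧
    G.Adj b d ∧ lam b d ≤ t ∧ G.Adj c d ∧ t < lam c d ∧
    (G.Adj a d → lam a d < t)

/-- Arc of the augmented implication digraph `Aug(G)`. -/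
def AugArc {V : Type*} (G : SimpleGraph V) (lam : V → V → ℕ) (p q : V × V) : Prop :=
  ImpArc G lam p q ∨
    ∃ a b c d t, CorrTri G lam a b c d t ∧
      ((p = (b, c) ∧ q = (a, c)) ∨ (p = (c, a) ∧ q = (c, b)))

/-- `p` forces `q`: directed path (possibly empty) from `p` to `q` in `Aug(G)`. -/
def Forces {V : Type*} (G : SimpleGraph V) (lam : V → V → ℕ) : V × V → V × V → Prop :=
  Relation.ReflTransGen (AugArc G lam)

/-- The set of necessary arcs of `G`. -/
def Ness {V : Type*} (G : SimpleGraph V) (lam : V → V → ℕ) : Set (V × V) :=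
  {p | G.Adj p.1 p.2 ∧ Forces G lam (p.2, p.1) p}

/-- Almost-temporal transitive orientation. -/
def IsATTO {V : Type*} (G : SimpleGraph V) (lam : V → V → ℕ) (O : V → V → Prop) : Prop :=
  IsOrientation G O ∧ ∀ p q, O p.1 p.2 → Forces G lam p q → O q.1 q.2

/-- `Ness(G)` induces an acyclic digraph (no directed cycle, including 2-cycles). -/
def NessAcyclic {V : Type*} (G : SimpleGraph V) (lam : V → V → ℕ) : Prop :=
  ¬ ∃ k : ℕ, 2 ≤ k ∧ ∃ v : ZMod k → V, Function.Injective v ∧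
      ∀ i, (v i, v (i + 1)) ∈ Ness G lam

/-!
An orientation is closed under forcing exactly when it has no arcs `a → b → c` with
`λ(ab) ≤ λ(bc)` that lack an edge `ac` of label at least `λ(bc)`, and no path `b → c → a` through a
correlated monolabel triangle `(a, b, c, d)`. The first condition makes every directed triangle of
an ATTO monolabel.

Fix a directed triangle on the arc `(a, b)` with apex `z`. Going backwards along forcing inside the
ATTO, every arc again forms a directed triangle with the *same* apex `z`. If `(a, b)` were
necessary, the path from `(b, a)` to `(a, b)` would enter the ATTO at some point, and there two arcs
sharing an endpoint would give opposite orientations of the edge joining that endpoint to `z`. So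
no necessary arc lies on a directed triangle of an ATTO.

Now let `a → b → c` be necessary with `λ(ab) ≤ λ(bc)`. If `(a, c)` were not necessary, everything
forced by `(c, a)` could be imposed on the ATTO, which would create a directed triangle on `(a, b)`;
so `(a, c)` is necessary. On a closed walk of necessary arcs, an arc of minimum label followed by
its successor can therefore be replaced by a single necessary arc, until a loop remains.
-/

theorem not_closed_walk_of_shortcut {α β : Type*} [LinearOrder β] {r : α → α → Prop}
    {w : α → α → β} (irrefl : ∀ a, ¬ r a a)
    (shortcut : ∀ a b c, r a b → r b c → w a b ≤ w b c → r a c) (k : ℕ) (v : Fin (k + 1) → α) :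
    ¬ ∀ i, r (v i) (v (i + 1)) := by
  induction k with
  | zero => exact fun hv => irrefl _ (by simpa using hv 0)
  | succ k ih =>
    intro hv
    obtain ⟨i, hi⟩ := Finite.exists_min fun i => w (v i) (v (i + 1))
    refine ih (fun j => v (i + 1 + 1 + j.castSucc)) fun j => ?_
    cases j using Fin.lastCases with
    | last =>
      have back : i + 1 + 1 + (Fin.last k).castSucc = i := calc
        i + 1 + 1 + (Fin.last k).castSucc = i + ((Fin.last k).castSucc + 1 + 1) := by abel
        _ = i := by rw [Fin.coeSucc_eq_succ, Fin.succ_last, Fin.last_add_one, add_zero]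
      simpa [back] using shortcut _ _ _ (hv i) (hv (i + 1)) (hi (i + 1))
    | cast j =>
      have next : (j.castSucc + 1).castSucc = j.castSucc.castSucc + 1 := by
        rw [Fin.coeSucc_eq_succ, Fin.coeSucc_eq_succ, Fin.succ_castSucc]
      simpa only [next, add_assoc] using hv (i + 1 + 1 + j.castSucc.castSucc)

section ATTO

variable {V : Type*} {G : SimpleGraph V} {lam : V → V → ℕ} {O : V → V → Prop}

theorem AugArc.swap {p q : V × V} (h : AugArc G lam p q) : AugArc G lam q.swap p.swap := by
  rcases h with ⟨a, b, c, hab, hbc, hle, hac, ⟨rfl, rfl⟩ | ⟨rfl, rfl⟩⟩ |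
    ⟨a, b, c, d, t, hT, ⟨rfl, rfl⟩ | ⟨rfl, rfl⟩⟩
  · exact .inl ⟨a, b, c, hab, hbc, hle, hac, .inr ⟨rfl, rfl⟩⟩
  · exact .inl ⟨a, b, c, hab, hbc, hle, hac, .inl ⟨rfl, rfl⟩⟩
  · exact .inr ⟨a, b, c, d, t, hT, .inr ⟨rfl, rfl⟩⟩
  · exact .inr ⟨a, b, c, d, t, hT, .inl ⟨rfl, rfl⟩⟩

theorem AugArc.fst_eq_or_snd_eq {p q : V × V} (h : AugArc G lam p q) :
    p.1 = q.1 ∨ p.2 = q.2 := by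
  rcases h with ⟨a, b, c, -, -, -, -, ⟨rfl, rfl⟩ | ⟨rfl, rfl⟩⟩ |
    ⟨a, b, c, d, t, -, ⟨rfl, rfl⟩ | ⟨rfl, rfl⟩⟩ <;> simp

theorem AugArc.adj_left {p q : V × V} (h : AugArc G lam p q) : G.Adj p.1 p.2 := by
  rcases h with ⟨a, b, c, hab, hbc, -, -, ⟨rfl, rfl⟩ | ⟨rfl, rfl⟩⟩ |
    ⟨a, b, c, d, t, ⟨-, hbc, hca, -⟩, ⟨rfl, rfl⟩ | ⟨rfl, rfl⟩⟩ <;> assumption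

theorem AugArc.adj_right {p q : V × V} (h : AugArc G lam p q) : G.Adj q.1 q.2 :=
  h.swap.adj_left.symm

theorem Forces.swap {p q : V × V} (h : Forces G lam p q) : Forces G lam q.swap p.swap := by
  induction h with
  | refl => exact .refl
  | tail _ hqr ih => exact .head hqr.swap ih

theorem Forces.adj {p q : V × V} (h : Forces G lam p q) (hp : G.Adj p.1 p.2) :
    G.Adj q.1 q.2 := by
  rcases Relation.ReflTransGen.cases_tail h with rfl | ⟨r, -, hrq⟩
  · exact hp
  · exact hrq.adj_right

theorem IsOrientation.adj (hO : IsOrientation G O) {a b : V} (h : O a b) : G.Adj a b :=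
  hO.1 a b h

theorem IsOrientation.asymm (hO : IsOrientation G O) {a b : V} (h : O a b) : ¬ O b a :=
  (hO.2 a b (hO.adj h)).1 h

theorem IsOrientation.of_not (hO : IsOrientation G O) {a b : V} (hab : G.Adj a b)
    (h : ¬ O b a) : O a b :=
  (hO.2 a b hab).2 h

theorem IsATTO.of_augArc (hO : IsATTO G lam O) {p q : V × V} (hpq : AugArc G lam p q)
    (hp : O p.1 p.2) : O q.1 q.2 :=
  hO.2 p q hp (.single hpq)

theorem IsATTO.adj_and_label_le (hO : IsATTO G lam O) {a b c : V} (hab : O a b) (hbc : O b c)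
    (hle : lam a b ≤ lam b c) : G.Adj a c ∧ lam b c ≤ lam a c := by
  by_contra hac
  rw [not_and_or, not_le] at hac
  have harc : AugArc G lam (a, b) (c, b) :=
    .inl ⟨a, b, c, hO.1.adj hab, hO.1.adj hbc, hle, hac, .inl ⟨rfl, rfl⟩⟩
  exact hO.1.asymm hbc (hO.of_augArc harc hab)

theorem IsATTO.not_path_of_corrTri (hO : IsATTO G lam O) {a b c d : V} {t : ℕ}
    (hT : CorrTri G lam a b c d t) (hbc : O b c) : ¬ O c a := by
  have harc : AugArc G lam (b, c) (a, c) := .inr ⟨a, b, c, d, t, hT, .inl ⟨rfl, rfl⟩⟩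
  exact hO.1.asymm (hO.of_augArc harc hbc)

theorem IsATTO.of_mem_ness (hO : IsATTO G lam O) {a b : V} (h : (a, b) ∈ Ness G lam) :
    O a b := by
  by_contra hab
  exact hab (hO.2 (b, a) (a, b) (hO.1.of_not h.1.symm hab) h.2)

/-- The orientation `O` modified so as to contain all arcs forced by `p`. -/
def reorient (G : SimpleGraph V) (lam : V → V → ℕ) (O : V → V → Prop) (p : V × V) (x y : V) :
    Prop :=
  Forces G lam p (x, y) ∨ O x y ∧ ¬ Forces G lam p (y, x)

theorem not_forces_swap_of_forces {p q : V × V} (hp : ¬ Forces G lam p p.swap)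
    (hq : Forces G lam p q) : ¬ Forces G lam p q.swap :=
  fun hq' => hp (hq'.trans hq.swap)

theorem IsATTO.isATTO_reorient (hO : IsATTO G lam O) {p : V × V} (hadj : G.Adj p.1 p.2)
    (hp : ¬ Forces G lam p p.swap) : IsATTO G lam (reorient G lam O p) := by
  refine ⟨⟨?_, fun x y hxy => ?_⟩, ?_⟩
  · rintro x y (h | ⟨h, -⟩)
    · exact h.adj hadj
    · exact hO.1.adj h
  · have hforced : Forces G lam p (x, y) → ¬ Forces G lam p (y, x) :=
      not_forces_swap_of_forces hp
    have horient := hO.1.2 x y hxy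
    unfold reorient
    tauto
  · rintro q r (h | ⟨h, hn⟩) hqr
    · exact .inl (h.trans hqr)
    · exact .inr ⟨hO.2 q r h hqr, fun h' => hn (h'.trans hqr.swap)⟩

/-- A directed triangle `x → y → z → x` of the orientation `O`, with `z` regarded as the apex over
the base arc `(x, y)`; labels are left out because they are all equal in an ATTO. -/
structure IsDirectedTriangle (O : V → V → Prop) (x y z : V) : Prop where
  base : O x y
  head_apex : O y z
  apex_tail : O z x

namespace IsDirectedTriangle

variable {x y z d : V}

theorem rotate (T : IsDirectedTriangle O x y z) : IsDirectedTriangle O y z x :=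
  ⟨T.head_apex, T.apex_tail, T.base⟩

theorem label_le_of_label_le (hsym : ∀ a b, lam a b = lam b a) (hO : IsATTO G lam O)
    (T : IsDirectedTriangle O x y z) (h : lam x y ≤ lam y z) : lam y z ≤ lam z x :=
  hsym x z ▸ (hO.adj_and_label_le T.base T.head_apex h).2

theorem label_eq (hsym : ∀ a b, lam a b = lam b a) (hO : IsATTO G lam O)
    (T : IsDirectedTriangle O x y z) : lam x y = lam y z := by
  have h₁ := T.label_le_of_label_le hsym hO
  have h₂ := T.rotate.label_le_of_label_le hsym hO
  have h₃ := T.rotate.rotate.label_le_of_label_le hsym hO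
  omega

theorem adj_apex_and_label_le_of_tail_le_of_lt_head (hsym : ∀ a b, lam a b = lam b a)
    (hO : IsATTO G lam O) (T : IsDirectedTriangle O x y z) (hxd : G.Adj x d)
    (hle : lam x d ≤ lam x y) (hyd : G.Adj y d) (hlt : lam x y < lam y d) :
    G.Adj z d ∧ lam x y ≤ lam z d := by
  by_contra! hzd
  have hyz := T.label_eq hsym hO
  have hzx := T.rotate.label_eq hsym hO
  have hcorr : CorrTri G lam z x y d (lam x y) :=
    ⟨hO.1.adj T.apex_tail, hO.1.adj T.base, hO.1.adj T.head_apex, by omega, rfl, hyz.symm,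
      hxd, hle, hyd, hlt, hzd⟩
  exact hO.not_path_of_corrTri hcorr T.base T.head_apex

theorem adj_apex_and_label_le_of_head_le_of_lt_tail (hsym : ∀ a b, lam a b = lam b a)
    (hO : IsATTO G lam O) (T : IsDirectedTriangle O x y z) (hyd : G.Adj y d)
    (hle : lam y d ≤ lam x y) (hxd : G.Adj x d) (hlt : lam x y < lam x d) :
    G.Adj z d ∧ lam x y ≤ lam z d := by
  have hyz := T.label_eq hsym hO
  have hzx := T.rotate.label_eq hsym hO
  have hdx := hsym d x
  have hdy := hsym d y
  by_cases Oxd : O x d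
  · have := hO.adj_and_label_le T.apex_tail Oxd (by omega)
    exact ⟨this.1, by omega⟩
  have Odx : O d x := hO.1.of_not hxd.symm Oxd
  have Ody : O d y := by
    refine hO.1.of_not hyd.symm fun Oyd => ?_
    have := (hO.adj_and_label_le Oyd Odx (by omega)).2
    have := hsym x y
    omega
  have := hO.adj_and_label_le Ody T.head_apex (by omega)
  exact ⟨this.1.symm, by have := hsym d z; omega⟩

theorem adj_tail_and_label_le_of_common_apex_tail (hsym : ∀ a b, lam a b = lam b a)
    (hO : IsATTO G lam O) {x' : V} (T : IsDirectedTriangle O x y z)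
    (T' : IsDirectedTriangle O x x' z) (hdx' : O d x') (hle : lam d x' ≤ lam x y)
    (hyd : G.Adj y d) (hlt : lam x y < lam y d) : G.Adj x d ∧ lam x y ≤ lam x d := by
  have hyz := T.label_eq hsym hO
  have hzx := T.rotate.label_eq hsym hO
  have hx'z := T'.rotate.label_eq hsym hO
  have hx'd := hsym x' d
  have hdz := (hO.adj_and_label_le hdx' T'.head_apex (by omega)).1
  rw [hyz]
  rcases le_or_gt (lam z d) (lam y z) with hle' | hlt'
  · exact T.rotate.adj_apex_and_label_le_of_head_le_of_lt_tail hsym hO hdz.symm hle' hyd (by omega)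
  · have := T'.rotate.adj_apex_and_label_le_of_tail_le_of_lt_head hsym hO (hO.1.adj hdx').symm
      (by omega) hdz.symm (by omega)
    exact ⟨this.1, by omega⟩

theorem of_impArc_snd (hsym : ∀ a b, lam a b = lam b a) (hO : IsATTO G lam O)
    (T : IsDirectedTriangle O x y z) {x' : V} (hx' : O x' y) (hle : lam x' y ≤ lam y x)
    (hearly : ¬ G.Adj x' x ∨ lam x' x < lam y x) : IsDirectedTriangle O x' y z := by
  have hyz := T.label_eq hsym hO
  have hzx := T.rotate.label_eq hsym hO
  have hyx := hsym y x
  have hx'z := hO.adj_and_label_le hx' T.head_apex (by omega)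
  refine ⟨hx', T.head_apex, hO.1.of_not hx'z.1.symm fun Ox'z => ?_⟩
  have hx'x : G.Adj x' x ∧ lam y x ≤ lam x' x := by
    rcases le_or_gt (lam x' z) (lam z x) with hle' | hlt
    · have := hO.adj_and_label_le Ox'z T.apex_tail hle'
      exact ⟨this.1, by omega⟩
    · have := T.rotate.adj_apex_and_label_le_of_tail_le_of_lt_head hsym hO (hO.1.adj hx').symm
        (by have := hsym y x'; omega) hx'z.1.symm (by have := hsym z x'; omega)
      exact ⟨this.1.symm, by have := hsym x x'; omega⟩
  exact hearly.elim (· hx'x.1) hx'x.2.not_gt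

theorem of_impArc_fst (hsym : ∀ a b, lam a b = lam b a) (hO : IsATTO G lam O)
    (T : IsDirectedTriangle O x y z) {y' : V} (hy' : O x y') (hle : lam y x ≤ lam x y')
    (hearly : ¬ G.Adj y y' ∨ lam y y' < lam x y') : IsDirectedTriangle O x y' z := by
  have hyz := T.label_eq hsym hO
  have hzx := T.rotate.label_eq hsym hO
  have hyx := hsym y x
  have hzy' := hO.adj_and_label_le T.apex_tail hy' (by omega)
  refine ⟨hy', hO.1.of_not hzy'.1.symm fun Ozy' => ?_, T.apex_tail⟩
  have hyy' := hO.adj_and_label_le T.head_apex Ozy' (by omega)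
  exact hearly.elim (· hyy'.1) (hzy'.2.trans hyy'.2).not_gt

theorem of_corrTri_snd (hsym : ∀ a b, lam a b = lam b a) (hO : IsATTO G lam O)
    (T : IsDirectedTriangle O x y z) {x' : V} {t : ℕ} (hcorr : CorrTri G lam x x' y d t)
    (hx' : O x' y) : IsDirectedTriangle O x' y z := by
  obtain ⟨hxx', -, -, lxx', lx'y, lyx, hx'd, lx'd, hyd, lyd, hxd⟩ := hcorr
  have hxy := hsym x y
  have hyz := T.label_eq hsym hO
  have hdx := hsym d x
  have hdy := hsym d y
  have hdx' := hsym d x'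
  have hx'x := hsym x' x
  have hx'z := hO.adj_and_label_le hx' T.head_apex (by omega)
  refine ⟨hx', T.head_apex, hO.1.of_not hx'z.1.symm fun Ox'z => ?_⟩
  have Ody : O d y := hO.1.of_not hyd.symm fun Oyd => by
    have := hO.adj_and_label_le T.base Oyd (by omega)
    have := hxd this.1
    omega
  have Odx' : O d x' := hO.1.of_not hx'd.symm fun Ox'd => by
    have := hO.adj_and_label_le Ox'd Ody (by omega)
    omega
  have Oxx' : O x x' := hO.1.of_not hxx' fun Ox'x => by
    have := hO.adj_and_label_le Odx' Ox'x (by omega)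
    have := hxd this.1.symm
    omega
  have T' : IsDirectedTriangle O x x' z := ⟨Oxx', Ox'z, T.apex_tail⟩
  have hxd' := T.adj_tail_and_label_le_of_common_apex_tail hsym hO T' Odx' (by omega) hyd (by omega)
  exact (hxd hxd'.1).not_ge (by omega)

theorem of_corrTri_fst (hsym : ∀ a b, lam a b = lam b a) (hO : IsATTO G lam O)
    (T : IsDirectedTriangle O x y z) {y' : V} {t : ℕ} (hcorr : CorrTri G lam y' y x d t)
    (hy' : O x y') : IsDirectedTriangle O x y' z := by
  obtain ⟨hy'y, -, -, ly'y, lyx, lxy', hyd, lyd, hxd, lxd, hy'd⟩ := hcorr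
  have hxy := hsym x y
  have hyz := T.label_eq hsym hO
  have hzx := T.rotate.label_eq hsym hO
  have hdx := hsym d x
  have hdz := hsym d z
  have hdy' := hsym d y'
  have hzy' := hO.adj_and_label_le T.apex_tail hy' (by omega)
  refine ⟨hy', hO.1.of_not hzy'.1.symm fun Ozy' => ?_, T.apex_tail⟩
  have lzy' : lam z y' = t := by
    have := hO.adj_and_label_le T.head_apex Ozy' (by omega)
    have := hsym y y'
    omega
  have hzd := T.adj_apex_and_label_le_of_head_le_of_lt_tail hsym hO hyd (by omega) hxd (by omega)
  have lzd : lam z d = t := by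
    by_contra hne
    have hcorr' : CorrTri G lam y' y z d t :=
      ⟨hy'y, hO.1.adj T.head_apex, hzy'.1, ly'y, by omega, lzy', hyd, lyd, hzd.1, by omega, hy'd⟩
    exact hO.not_path_of_corrTri hcorr' T.head_apex Ozy'
  have Ozd : O z d := hO.1.of_not hzd.1 fun Odz => by
    have := hO.adj_and_label_le Odz Ozy' (by omega)
    have := hy'd this.1.symm
    omega
  have Odx : O d x := hO.1.of_not hxd.symm fun Oxd => by
    have := hO.adj_and_label_le T.apex_tail Oxd (by omega)
    omega
  have := hO.adj_and_label_le Ozd Odx (by omega)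
  omega

theorem of_augArc (hsym : ∀ a b, lam a b = lam b a) (hO : IsATTO G lam O) {p q : V × V}
    (T : IsDirectedTriangle O q.1 q.2 z) (hpq : AugArc G lam p q) (hp : O p.1 p.2) :
    IsDirectedTriangle O p.1 p.2 z := by
  rcases hpq with ⟨a, b, c, -, -, hle, hac, ⟨rfl, rfl⟩ | ⟨rfl, rfl⟩⟩ |
    ⟨a, b, c, d, t, hcorr, ⟨rfl, rfl⟩ | ⟨rfl, rfl⟩⟩
  · exact T.of_impArc_snd hsym hO hp hle hac
  · exact T.of_impArc_fst hsym hO hp hle hac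
  · exact T.of_corrTri_snd hsym hO hcorr hp
  · exact T.of_corrTri_fst hsym hO hcorr hp

theorem of_forces (hsym : ∀ a b, lam a b = lam b a) (hO : IsATTO G lam O) {p q : V × V}
    (T : IsDirectedTriangle O q.1 q.2 z) (hpq : Forces G lam p q) (hp : O p.1 p.2) :
    IsDirectedTriangle O p.1 p.2 z := by
  induction hpq using Relation.ReflTransGen.head_induction_on with
  | refl => exact T
  | head hpr _ ih => exact (ih (hO.of_augArc hpr hp)).of_augArc hsym hO hpr hp

theorem not_swap_of_forces (hsym : ∀ a b, lam a b = lam b a) (hO : IsATTO G lam O)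
    {p q : V × V} (T : IsDirectedTriangle O q.1 q.2 z) (hpq : Forces G lam p q) :
    ¬ IsDirectedTriangle O p.2 p.1 z := by
  induction hpq using Relation.ReflTransGen.head_induction_on with
  | refl => exact fun T' => hO.1.asymm T.base T'.base
  | @head p r hpr hrq ih =>
    intro Tp
    by_cases hr : O r.1 r.2
    · have Tr := T.of_forces hsym hO hrq hr
      rcases hpr.fst_eq_or_snd_eq with h | h
      · exact hO.1.asymm Tr.apex_tail (h ▸ Tp.head_apex)
      · exact hO.1.asymm Tr.head_apex (h ▸ Tp.apex_tail)
    · have hr' : O r.2 r.1 := hO.1.of_not hpr.adj_right.symm hr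
      exact ih (of_augArc hsym hO (q := p.swap) Tp hpr.swap hr')

theorem base_notMem_ness (hsym : ∀ a b, lam a b = lam b a) (hO : IsATTO G lam O)
    (T : IsDirectedTriangle O x y z) : (x, y) ∉ Ness G lam :=
  fun h => not_swap_of_forces hsym hO (q := (x, y)) T h.2 T

end IsDirectedTriangle

theorem IsATTO.mem_ness_trans_of_label_le (hsym : ∀ a b, lam a b = lam b a)
    (hO : IsATTO G lam O) {a b c : V} (hab : (a, b) ∈ Ness G lam) (hbc : (b, c) ∈ Ness G lam)
    (hle : lam a b ≤ lam b c) : (a, c) ∈ Ness G lam := by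
  have hac := (hO.adj_and_label_le (hO.of_mem_ness hab) (hO.of_mem_ness hbc) hle).1
  by_contra hn
  have hO' : IsATTO G lam (reorient G lam O (c, a)) :=
    hO.isATTO_reorient hac.symm fun h => hn ⟨hac, h⟩
  have T : IsDirectedTriangle (reorient G lam O (c, a)) a b c :=
    ⟨hO'.of_mem_ness hab, hO'.of_mem_ness hbc, .inl .refl⟩
  exact T.base_notMem_ness hsym hO' hab

end ATTO

theorem stmt12_general {V : Type*} (G : SimpleGraph V) (lam : V → V → ℕ)
    (hsym : ∀ a b, lam a b = lam b a)
    (h : ∃ O : V → V → Prop, IsATTO G lam O) :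
    NessAcyclic G lam := by
  obtain ⟨O, hO⟩ := h
  rintro ⟨_ | k, hk, v, -, hv⟩
  · omega
  · exact not_closed_walk_of_shortcut (r := fun a b => (a, b) ∈ Ness G lam)
      (fun a ha => G.loopless.irrefl a ha.1)
      (fun _ _ _ => hO.mem_ness_trans_of_label_le hsym) k v hv

theorem stmt12 {V : Type*} [Fintype V] (G : SimpleGraph V) (lam : V → V → ℕ)
    (hsym : ∀ a b, lam a b = lam b a)
    (h : ∃ O : V → V → Prop, IsATTO G lam O) :
    NessAcyclic G lam :=
  stmt12_general G lam hsym h
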